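/- Set X_𝟎^d := {(x_1,…,x_d) ∈ X^d : x_i = 𝟎 for some i}, and let σ be a Radon measure on X^d. Then σ is T^{×d}-invariant if and only if the following two conditions hold: (1) σ(X_𝟎^d) = 0; (2) for each n, any two n-boxes lying on the same n-diagonal have the same σ-measure. -/

import Mathlib

/-!
The boxes `{y | ∀ i, y i ∈ L_n^{v i}}`, over all `n` and `v`, form a countable basis of the
topology of `X^d`, and two boxes are either nested or disjoint. Hence they are a π-system
generating the Borel σ-algebra, and a Radon measure is determined by its values on boxes.

Each copy of tower `n` inside a higher tower is a block of consecutive levels, so for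
`j + 1 < h_n` the preimage `T⁻¹ L_n^{j+1}` equals `L_n^j`: condition (2) says exactly that `σ` and
`σ ∘ (T^{×d})⁻¹` agree on all boxes avoiding the bottom level in every coordinate.

A point other than `𝟎` leaves the bottom level in all high enough towers, so these boxes cover the
complement of `X_𝟎^d`. As `X_𝟎^d` is also the complement of the range of `T^{×d}`, it is null for
`σ ∘ (T^{×d})⁻¹`. Invariance therefore forces condition (1); conversely, under (1) and (2), the
measures `σ` and `σ ∘ (T^{×d})⁻¹` agree on a generating π-system intersected with the members of a
countable cover, hence are equal.
-/

open MeasureTheory Set Filter Topology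
open scoped ENNReal
open scoped Classical

noncomputable section

/-! ## The nearly finite Chacon transformation: symbolic model -/

/-- The alphabet `{*} ∪ ℕ` is modelled by `Option ℕ`, `none` playing the role of `*`. -/
instance optionNatTop : TopologicalSpace (Option ℕ) := ⊥

/-- The data of the two sequences `(n_ℓ)` and `(ℓ_k)` used in the construction of the
nearly finite Chacon transformation, together with the growth conditions imposed on them. -/
structure NFCseq where
  nseq : ℕ → ℕ
  lseq : ℕ → ℕ
  nseq_zero : nseq 0 = 0
  lseq_zero : lseq 0 = 1
  lseq_strictMono : StrictMono lseq
  nseq_growth : ∀ ℓ : ℕ, 1 ≤ ℓ → nseq (ℓ - 1) + 2 * ℓ < nseq ℓ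
  lseq_growth : ∀ k : ℕ, (2 : ℝ) ≤ (1 + ((7 : ℝ) ^ k)⁻¹) ^ (lseq (k + 1) - lseq k)

namespace NFCseq

/-- `k(ℓ)`: the unique `k` with `ℓ_k ≤ ℓ < ℓ_{k+1}`. -/
def kOf (P : NFCseq) (ℓ : ℕ) : ℕ := sSup {k | P.lseq k ≤ ℓ}

/-- The heights `h_n` of the towers. -/
def hgt (P : NFCseq) : ℕ → ℕ
  | 0 => 1
  | n + 1 =>
    3 * P.hgt n +
      3 * (if hn : ∃ ℓ, 1 ≤ ℓ ∧ P.nseq ℓ = n then P.hgt (n - P.kOf (Nat.find hn)) else 0) + 1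
termination_by n => n
decreasing_by all_goals omega

theorem hgt_pos (P : NFCseq) (n : ℕ) : 0 < P.hgt n := by
  cases n with
  | zero => simp [hgt]
  | succ n => rw [hgt]; omega

/-- The number of spacers put above the first subcolumn at step `n+1`
(`h_{n-k(ℓ)}` if `n = n_ℓ`, and `0` otherwise). -/
def spa (P : NFCseq) (n : ℕ) : ℕ :=
  if hn : ∃ ℓ, 1 ≤ ℓ ∧ P.nseq ℓ = n then P.hgt (n - P.kOf (Nat.find hn)) else 0

/-- The map `p_n` sending the index of a level of tower `n+1` to the index of the level of
tower `n` containing it (`none` if that level lies outside tower `n`). -/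
def pmap (P : NFCseq) (n j : ℕ) : Option ℕ :=
  if j < P.hgt n then some j
  else if j < P.hgt n + P.spa n then none
  else if j < 2 * P.hgt n + P.spa n then some (j - (P.hgt n + P.spa n))
  else if j < 2 * P.hgt n + 2 * P.spa n + 1 then none
  else if j < 3 * P.hgt n + 2 * P.spa n + 1 then some (j - (2 * P.hgt n + 2 * P.spa n + 1))
  else none

/-- The defining property of points of the space `X`. -/
def Xspec (P : NFCseq) (x : ℕ → Option ℕ) : Prop :=
  (∀ n, x n = (x (n + 1)).bind (P.pmap n)) ∧ ∃ n, x n ≠ none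

/-- The space `X` of the symbolic model, with its product (subspace) topology. -/
abbrev Xpt (P : NFCseq) : Type := {x : ℕ → Option ℕ // P.Xspec x}

instance (P : NFCseq) : MeasurableSpace P.Xpt := borel _

/-- `L_n^j`, the `j`-th level of tower `n`. -/
def level (P : NFCseq) (n j : ℕ) : Set P.Xpt := {x | x.1 n = some j}

/-- `C_n`, the union of all levels of tower `n`. -/
def tower (P : NFCseq) (n : ℕ) : Set P.Xpt := {x | x.1 n ≠ none}

theorem pmap_zero (P : NFCseq) (n : ℕ) : P.pmap n 0 = some 0 := by
  unfold pmap
  simp [P.hgt_pos n]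

/-- The point `𝟎 = (0,0,…)`. -/
def zeroPt (P : NFCseq) : P.Xpt :=
  ⟨fun _ => some 0, fun n => by
    show some 0 = (some 0).bind (P.pmap n)
    simp [P.pmap_zero n], 0, by simp⟩

/-- `t_n(x) ∈ {1,2,3}`: the subcolumn of tower `n` to which `x` belongs
(junk value `0` if `x` is not in tower `n+1`). -/
def tcol (P : NFCseq) (n : ℕ) (x : P.Xpt) : ℕ :=
  match x.1 (n + 1) with
  | none => 0
  | some j =>
    if j < P.hgt n + P.spa n then 1
    else if j < 2 * P.hgt n + 2 * P.spa n + 1 then 2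
    else 3

/-- The index (from `0` to `3^(m-n) - 1`, ordered from bottom to top of tower `m`) of the
occurrence of tower `n` inside tower `m` to which `x` belongs. -/
def occIdx (P : NFCseq) (n m : ℕ) (x : P.Xpt) : ℕ :=
  ∑ r ∈ Finset.Ico n m, (P.tcol r x - 1) * 3 ^ (r - n)

/-- `x` belongs to one of the first hundred occurrences of tower `n` inside tower `m`. -/
def inFirstHundred (P : NFCseq) (n m : ℕ) (x : P.Xpt) : Prop := P.occIdx n m x < 100

/-- `x` belongs to one of the last hundred occurrences of tower `n` inside tower `m`. -/
def inLastHundred (P : NFCseq) (n m : ℕ) (x : P.Xpt) : Prop :=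
  3 ^ (m - n) ≤ P.occIdx n m x + 100

end NFCseq

/-- The nearly finite Chacon transformation `T` together with its invariant measure `μ`. -/
structure NFC extends NFCseq where
  T : toNFCseq.Xpt → toNFCseq.Xpt
  μ : Measure toNFCseq.Xpt
  T_inj : Function.Injective T
  T_range : Set.range T = {toNFCseq.zeroPt}ᶜ
  T_up : ∀ x : toNFCseq.Xpt, ∃ N : ℕ, ∀ n, N ≤ n →
    ∃ j : ℕ, x.1 n = some j ∧ (T x).1 n = some (j + 1)
  T_meas : Measurable T
  μ_level : ∀ n j : ℕ, j < toNFCseq.hgt n →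
    μ (toNFCseq.level n j) = (3 : ℝ≥0∞)⁻¹ ^ n
  μ_pres : MeasurePreserving T μ μ
  μ_sfin : SigmaFinite μ

namespace NFC

/-- `X^d`. -/
abbrev Xd (S : NFC) (d : ℕ) : Type := Fin d → S.toNFCseq.Xpt

/-- The Cartesian power `T^{×d}`. -/
def Td (S : NFC) (d : ℕ) : S.Xd d → S.Xd d := fun y i => S.T (y i)

/-- `C_n^d`. -/
def towerD (S : NFC) (d n : ℕ) : Set (S.Xd d) := {y | ∀ i, y i ∈ S.toNFCseq.tower n}

/-- `B` is an `n`-box. -/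
def IsNBox (S : NFC) (d n : ℕ) (B : Set (S.Xd d)) : Prop :=
  ∃ v : Fin d → ℕ, (∀ i, v i < S.toNFCseq.hgt n) ∧
    B = {y : S.Xd d | ∀ i, y i ∈ S.toNFCseq.level n (v i)}

/-- A measure on `X^d` is Radon iff it is finite on each `C_n^d`. -/
def IsRadon (S : NFC) (d : ℕ) (σ : Measure (S.Xd d)) : Prop :=
  ∀ n, σ (S.towerD d n) < ⊤

/-- `σ` is `T^{×d}`-invariant. -/
def InvariantD (S : NFC) (d : ℕ) (σ : Measure (S.Xd d)) : Prop :=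
  ∀ A : Set (S.Xd d), MeasurableSet A → σ ((S.Td d) ⁻¹' A) = σ A

/-- `T^{-e} A`, the preimage of `A` under `T^e` for `e ∈ ℤ` (image for negative `e`). -/
def preT (S : NFC) : ℤ → Set S.toNFCseq.Xpt → Set S.toNFCseq.Xpt
  | Int.ofNat k, A => S.T^[k] ⁻¹' A
  | Int.negSucc k, A => S.T^[k + 1] '' A

/-- `σ` is a graph measure arising from powers of `T` on `X^ι`:
`σ(∏ᵢ Aᵢ) = α · μ(⋂ᵢ T^{-eᵢ} Aᵢ)`. -/
def IsGraphMeasure (S : NFC) {ι : Type} (σ : Measure (ι → S.toNFCseq.Xpt)) : Prop :=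
  ∃ α : ℝ≥0∞, 0 < α ∧ α ≠ ⊤ ∧ ∃ e : ι → ℤ,
    ∀ A : ι → Set S.toNFCseq.Xpt, (∀ i, MeasurableSet (A i)) →
      σ (Set.univ.pi A) = α * S.μ (⋂ i, S.preT (e i) (A i))

/-- `σ = σ^{D_1} ⊗ ⋯ ⊗ σ^{D_r}` for a partition `D_1, …, D_r` of `{1,…,d}` where each
`σ^{D_j}` is a graph measure on `X^{D_j}` arising from powers of `T`. -/
def IsProductOfGraphMeasures (S : NFC) (d : ℕ) (σ : Measure (S.Xd d)) : Prop :=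
  ∃ (r : ℕ) (D : Fin r → Finset (Fin d)),
    (∀ j, (D j).Nonempty) ∧
    (∀ j j', j ≠ j' → Disjoint (D j) (D j')) ∧
    (∀ i : Fin d, ∃ j, i ∈ D j) ∧
    ∃ σD : ∀ j : Fin r, Measure ({i // i ∈ D j} → S.toNFCseq.Xpt),
      (∀ j, S.IsGraphMeasure (σD j)) ∧
      ∀ A : Fin d → Set S.toNFCseq.Xpt, (∀ i, MeasurableSet (A i)) →
        σ (Set.univ.pi A) =
          ∏ j : Fin r, σD j (Set.univ.pi fun i : {i // i ∈ D j} => A i.1)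

end NFC


/-- `(T)^j W` for `j ∈ ℤ`: forward images for `j ≥ 0`, preimages for `j < 0`. -/
def iterZ {α : Type*} (f : α → α) : ℤ → Set α → Set α
  | Int.ofNat k, A => f^[k] '' A
  | Int.negSucc k, A => f^[k + 1] ⁻¹' A

namespace NFC

/-- `σ` is totally dissipative: there is a wandering set `W` whose `ℤ`-orbit covers
`X^d` up to a `σ`-null set. -/
def TotallyDissipative (S : NFC) (d : ℕ) (σ : Measure (S.Xd d)) : Prop :=
  ∃ W : Set (S.Xd d), MeasurableSet W ∧
    (∀ j j' : ℤ, j ≠ j' → Disjoint (iterZ (S.Td d) j W) (iterZ (S.Td d) j' W)) ∧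
    σ (⋃ j : ℤ, iterZ (S.Td d) j W)ᶜ = 0

/-- The ring `𝓡` of finite unions of `n`-boxes. -/
def BoxRing (S : NFC) (d : ℕ) : Set (Set (S.Xd d)) :=
  {B | ∃ n : ℕ, ∃ 𝔅 : Finset (Set (S.Xd d)), (∀ b ∈ 𝔅, S.IsNBox d n b) ∧ B = ⋃₀ ↑𝔅}

/-- Convergence of a sequence of Radon measures on `X^d`. -/
def RTendsto (S : NFC) (d : ℕ) (σk : ℕ → Measure (S.Xd d)) (σ : Measure (S.Xd d)) : Prop :=
  ∀ n : ℕ, 0 < σ (S.towerD d n) →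
    (∀ᶠ k in atTop, 0 < σk k (S.towerD d n)) ∧
    ∀ B : Set (S.Xd d), S.IsNBox d n B →
      Tendsto (fun k => σk k B / σk k (S.towerD d n)) atTop
        (𝓝 (σ B / σ (S.towerD d n)))

/-- The edge `∂C_n^d` of `C_n^d`. -/
def edgeD (S : NFC) (d n : ℕ) : Set (S.Xd d) :=
  {y | y ∈ S.towerD d n ∧ ∃ i, y i ∈ S.toNFCseq.level n 0 ∨
    y i ∈ S.toNFCseq.level n (S.toNFCseq.hgt n - 1)}

/-- `Ω_m`: the union of all `m`-boxes `L_m^{j_1} × ⋯ × L_m^{j_d}` with `j_i ≠ 0` for all `i`. -/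
def OmegaD (S : NFC) (d m : ℕ) : Set (S.Xd d) :=
  {y | ∀ i, ∃ j : ℕ, j ≠ 0 ∧ j < S.toNFCseq.hgt m ∧ y i ∈ S.toNFCseq.level m j}

/-- A twisting transformation on `X^d`: it applies `T` to the coordinates in a nonempty
proper subset `G_1 ⊆ {1,…,d}` and the identity to the others. -/
def IsTwist (S : NFC) (d : ℕ) (Sw : S.Xd d → S.Xd d) : Prop :=
  ∃ G : Fin d → Bool, (∃ i, G i = true) ∧ (∃ i, G i = false) ∧
    ∀ (y : S.Xd d) (i : Fin d), Sw y i = if G i then S.T (y i) else y i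

/-- The empirical measure `γ_J = ∑_{j ∈ J} δ_{(T^{×d})^j x}` along a two-sided orbit `o`. -/
def emp (S : NFC) (d : ℕ) (o : ℤ → S.Xd d) (J : Finset ℤ) : Measure (S.Xd d) :=
  ∑ j ∈ J, Measure.dirac (o j)

end NFC

/-- `J` is a (nonempty finite) interval of `ℤ`. -/
def IsIntervalZ (J : Finset ℤ) : Prop := ∃ a b : ℤ, a ≤ b ∧ J = Finset.Icc a b

namespace NFC

/-- `J` is an `n`-crossing for the orbit `o` of a point of `X^d`: a maximal interval on which
the orbit stays in `C_n^d` with all the `t_n(T^j x_i)` constant. -/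
def IsCrossing (S : NFC) (d : ℕ) (o : ℤ → S.Xd d) (n : ℕ) (J : Finset ℤ) : Prop :=
  IsIntervalZ J ∧
  (∀ j ∈ J, o j ∈ S.towerD d n) ∧
  (∀ i : Fin d, ∀ j ∈ J, ∀ j' ∈ J, S.toNFCseq.tcol n (o j i) = S.toNFCseq.tcol n (o j' i)) ∧
  ∀ J' : Finset ℤ, J ⊆ J' → IsIntervalZ J' →
    (∀ j ∈ J', o j ∈ S.towerD d n) →
    (∀ i : Fin d, ∀ j ∈ J', ∀ j' ∈ J', S.toNFCseq.tcol n (o j i) = S.toNFCseq.tcol n (o j' i)) →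
    J' = J

/-- An `n`-crossing is synchronized if `t_n(T^j x_1) = ⋯ = t_n(T^j x_d)` on it. -/
def IsSync (S : NFC) (d : ℕ) (o : ℤ → S.Xd d) (n : ℕ) (J : Finset ℤ) : Prop :=
  ∀ j ∈ J, ∀ i i' : Fin d, S.toNFCseq.tcol n (o j i) = S.toNFCseq.tcol n (o j i')

end NFC

/-- The interval `I_n` of length `h_n` centered at `0`. -/
def Imid (P : NFCseq) (n : ℕ) : Finset ℤ :=
  Finset.Icc (-((P.hgt n / 2 : ℕ) : ℤ)) (-((P.hgt n / 2 : ℕ) : ℤ) + P.hgt n - 1)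

namespace NFC

/-- A substantial `n`-crossing: an `n`-crossing whose intersection with `I_n` has at least
`η·h_n` elements. -/
def IsSubstantial (S : NFC) (d : ℕ) (o : ℤ → S.Xd d) (η : ℝ) (n : ℕ) (J : Finset ℤ) : Prop :=
  S.IsCrossing d o n J ∧ η * S.toNFCseq.hgt n ≤ ((J ∩ Imid S.toNFCseq n).card : ℝ)

/-- `x_i` climbs into tower `n` along the interval `I`. -/
def Climbs (S : NFC) (d : ℕ) (o : ℤ → S.Xd d) (i : Fin d) (n : ℕ) (I : Finset ℤ) : Prop :=
  (∀ j ∈ I, (o j) i ∈ S.toNFCseq.tower n) ∧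
  ¬ ∃ j : ℤ, j ∈ I ∧ j + 1 ∈ I ∧
      (o j) i ∈ S.toNFCseq.level n (S.toNFCseq.hgt n - 1) ∧
      (o (j + 1)) i ∈ S.toNFCseq.level n 0

end NFC

/-- The nearly finite Chacon system together with the conull set `X_∞` and the function
`x ↦ ℓ(x)` of Lemma 2.3. -/
structure NFCX extends NFC where
  Xinf : Set toNFCseq.Xpt
  ellx : toNFCseq.Xpt → ℕ
  Xinf_conull : μ Xinfᶜ = 0
  Xinf_spec : ∀ x ∈ Xinf, ∀ ℓ : ℕ, ellx x ≤ ℓ → ∀ n : ℕ,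
    nseq (ℓ - 1) ≤ n → n + ℓ ≤ nseq ℓ →
      x ∈ toNFCseq.tower n ∧ ¬ toNFCseq.inFirstHundred n (nseq ℓ) x ∧
        ¬ toNFCseq.inLastHundred n (nseq ℓ) x

namespace NFCX

/-- `o` is the two-sided orbit of a `σ`-typical point `x = o 0` (satisfying
conditions (1), (2) and (3) of Section 3.4 of the paper). -/
def IsTypicalOrbit (S : NFCX) (d : ℕ) (σ : Measure (S.toNFC.Xd d))
    (o : ℤ → S.toNFC.Xd d) : Prop :=
  (∀ j : ℤ, S.toNFC.Td d (o j) = o (j + 1)) ∧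
  (∀ j : ℤ, ∀ n : ℕ, 0 < σ (S.toNFC.towerD d n) →
    ∀ B : Set (S.toNFC.Xd d), S.toNFC.IsNBox d n B →
    ∀ a b : ℕ → ℤ, (∀ k, a k ≤ 0) → (∀ k, 0 ≤ b k) →
      Tendsto (fun k => b k - a k) atTop atTop →
      Tendsto (fun k =>
          (((Finset.Icc (a k) (b k)).filter (fun j' => o (j + j') ∈ B)).card : ℝ) /
            (((Finset.Icc (a k) (b k)).filter
              (fun j' => o (j + j') ∈ S.toNFC.towerD d n)).card : ℝ))
        atTop (𝓝 ((σ B).toReal / (σ (S.toNFC.towerD d n)).toReal))) ∧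
  (∀ n : ℕ, ∀ B : Set (S.toNFC.Xd d), S.toNFC.IsNBox d n B → o 0 ∈ B → 0 < σ B) ∧
  (∀ i : Fin d, (o 0) i ∈ S.Xinf)

end NFCX

/-! ## Subsets of `ℤ` of order `ℓ` inside an interval -/

/-- A piece of `F ∩ I`: a maximal interval included in `F ∩ I`. -/
def IsPieceZ (F : Set ℤ) (I : Finset ℤ) (J : Finset ℤ) : Prop :=
  IsIntervalZ J ∧ (↑J : Set ℤ) ⊆ F ∩ ↑I ∧
    ∀ J' : Finset ℤ, IsIntervalZ J' → (↑J' : Set ℤ) ⊆ F ∩ ↑I → J ⊆ J' → J' = J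

/-- A hole of `F ∩ I`: a maximal interval included in `I \ F`. -/
def IsHoleZ (F : Set ℤ) (I : Finset ℤ) (J : Finset ℤ) : Prop :=
  IsIntervalZ J ∧ (↑J : Set ℤ) ⊆ (↑I : Set ℤ) \ F ∧
    ∀ J' : Finset ℤ, IsIntervalZ J' → (↑J' : Set ℤ) ⊆ (↑I : Set ℤ) \ F → J ⊆ J' → J' = J

/-- Each hole of `F ∩ I` has size at most `s`. -/
def HolesSmall (F : Set ℤ) (I : Finset ℤ) (s : ℕ) : Prop :=
  ∀ H : Finset ℤ, IsHoleZ F I H → H.card ≤ s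

/-- Two consecutive holes of `F ∩ I` are always separated by a piece of size at least `c`. -/
def HolesSeparated (F : Set ℤ) (I : Finset ℤ) (c : ℕ) : Prop :=
  ∀ H₁ H₂ : Finset ℤ, IsHoleZ F I H₁ → IsHoleZ F I H₂ →
    (∀ a ∈ H₁, ∀ b ∈ H₂, a < b) →
    ∃ J : Finset ℤ, IsPieceZ F I J ∧ c ≤ J.card ∧ ∀ a ∈ H₁, ∀ b ∈ H₂, ∀ x ∈ J, a < x ∧ x < b

/-- `F` is of order `ℓ ≥ 1` inside the interval `I`, with respect to the sequences `c`, `s`. -/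
def IsOrder (c s : ℕ → ℕ) : ℕ → Set ℤ → Finset ℤ → Prop
  | 0, _, _ => False
  | 1, F, I => HolesSmall F I (s 1) ∧ HolesSeparated F I (c 1)
  | (ℓ + 2), F, I => ∃ F' : Set ℤ, F ⊆ F' ∧ HolesSmall F' I (s (ℓ + 2)) ∧
      HolesSeparated F' I (c (ℓ + 2)) ∧
      ∀ J : Finset ℤ, IsPieceZ F' I J → IsOrder c s (ℓ + 1) F J

/-- `p_1`: the smallest integer such that `3^{p_1} > 2d+1` and `p_1 > d`. -/
def pOne (d : ℕ) : ℕ := sInf {p : ℕ | 2 * d + 1 < 3 ^ p ∧ d < p}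

/-- `p_2`: the smallest integer such that `1/3^{p_2} < η/3`. -/
def pTwo (η : ℝ) : ℕ := sInf {p : ℕ | ((3 : ℝ) ^ p)⁻¹ < η / 3}


namespace NFCseq

/-! ### Levels of the towers -/

instance : DiscreteTopology (Option ℕ) := ⟨rfl⟩

instance (P : NFCseq) : BorelSpace P.Xpt := ⟨rfl⟩

instance (P : NFCseq) : SecondCountableTopology P.Xpt :=
  TopologicalSpace.Subtype.secondCountableTopology _

theorem hgt_succ (P : NFCseq) (n : ℕ) : P.hgt (n + 1) = 3 * P.hgt n + 3 * P.spa n + 1 := by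
  rw [hgt, spa]

theorem pmap_lt (P : NFCseq) {n a j : ℕ} (h : P.pmap n a = some j) : j < P.hgt n := by
  unfold pmap at h
  split_ifs at h <;> simp only [Option.some.injEq] at h <;> omega

theorem pmap_up (P : NFCseq) {n a j : ℕ} (h : P.pmap n a = some j) (hj : j + 1 < P.hgt n) :
    P.pmap n (a + 1) = some (j + 1) ∧ a + 1 < P.hgt (n + 1) := by
  rw [hgt_succ]
  unfold pmap at h ⊢
  split_ifs at h ⊢ <;> simp only [Option.some.injEq, false_and] at h ⊢ <;> omega

theorem pmap_down (P : NFCseq) {n a j : ℕ} (h : P.pmap n (a + 1) = some (j + 1)) :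
    P.pmap n a = some j := by
  unfold pmap at h ⊢
  split_ifs at h ⊢ <;> simp only [Option.some.injEq] at h ⊢ <;> omega

theorem coord_lt (P : NFCseq) (x : P.Xpt) {n j : ℕ} (h : x.1 n = some j) : j < P.hgt n := by
  rw [x.2.1 n] at h
  obtain ⟨a, -, ha⟩ := Option.bind_eq_some_iff.1 h
  exact P.pmap_lt ha

/-- A coordinate determines all lower ones. -/
theorem coord_eq_of_le (P : NFCseq) (x y : P.Xpt) {n m : ℕ} (hnm : n ≤ m)
    (h : x.1 m = y.1 m) : x.1 n = y.1 n := by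
  induction hnm using Nat.decreasingInduction with
  | self => exact h
  | of_succ k _ ih => rw [x.2.1 k, y.2.1 k, ih]

theorem tower_mono (P : NFCseq) (x : P.Xpt) {n m : ℕ} (hnm : n ≤ m) (h : x.1 n ≠ none) :
    x.1 m ≠ none := by
  induction hnm with
  | refl => exact h
  | step _ ih =>
    intro h0
    apply ih
    rw [x.2.1, h0]
    rfl

theorem eventually_tower (P : NFCseq) (x : P.Xpt) : ∃ N, ∀ m, N ≤ m → x.1 m ≠ none := by
  obtain ⟨N, hN⟩ := x.2.2
  exact ⟨N, fun m hm => P.tower_mono x hm hN⟩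

/-- Moving one level up in tower `n + k` moves one level up in tower `n`, as long as
the top of tower `n` is not crossed. -/
theorem coord_up (P : NFCseq) (x y : P.Xpt) (k : ℕ) :
    ∀ {n a j : ℕ}, x.1 (n + k) = some a → y.1 (n + k) = some (a + 1) →
      x.1 n = some j → j + 1 < P.hgt n → y.1 n = some (j + 1) := by
  induction k with
  | zero =>
    intro n a j hx hy hj _
    rw [Nat.add_zero] at hx hy
    rw [hx, Option.some.injEq] at hj
    rw [hy, hj]
  | succ k ih =>
    intro n a j hx hy hj hlt
    rw [x.2.1 n] at hj
    obtain ⟨b, hb, hbj⟩ := Option.bind_eq_some_iff.1 hj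
    obtain ⟨h1, h2⟩ := P.pmap_up hbj hlt
    rw [← Nat.succ_add_eq_add_succ] at hx hy
    rw [y.2.1 n, ih hx hy hb h2]
    exact h1

theorem coord_down (P : NFCseq) (x y : P.Xpt) (k : ℕ) :
    ∀ {n a j : ℕ}, x.1 (n + k) = some a → y.1 (n + k) = some (a + 1) →
      y.1 n = some (j + 1) → x.1 n = some j := by
  induction k with
  | zero =>
    intro n a j hx hy hj
    rw [Nat.add_zero] at hx hy
    rw [hy, Option.some.injEq] at hj
    rw [hx, Option.some.injEq]
    omega
  | succ k ih =>
    intro n a j hx hy hj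
    rw [y.2.1 n] at hj
    obtain ⟨b, hb, hbj⟩ := Option.bind_eq_some_iff.1 hj
    -- `b ≠ 0` because `p_n 0 = 0` while `b` is sent to `j + 1`
    obtain ⟨c, rfl⟩ : ∃ c, b = c + 1 := by
      refine Nat.exists_eq_succ_of_ne_zero ?_
      rintro rfl
      simp [pmap_zero] at hbj
    rw [← Nat.succ_add_eq_add_succ] at hx hy
    rw [x.2.1 n, ih hx hy hb]
    exact P.pmap_down hbj

theorem coord_zero_of_le (P : NFCseq) (x : P.Xpt) {n m : ℕ} (hnm : n ≤ m)
    (h : x.1 m = some 0) : x.1 n = some 0 :=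
  P.coord_eq_of_le x P.zeroPt hnm h

theorem eventually_ne_zero (P : NFCseq) (x : P.Xpt) (hx : x ≠ P.zeroPt) :
    ∃ N, ∀ m, N ≤ m → x.1 m ≠ some 0 := by
  by_contra! h
  refine hx (Subtype.ext (funext fun n => ?_))
  obtain ⟨m, hm, h0⟩ := h n
  exact P.coord_zero_of_le x hm h0

theorem isOpen_level (P : NFCseq) (n j : ℕ) : IsOpen (P.level n j) :=
  (isOpen_discrete ({some j} : Set (Option ℕ))).preimage
    ((continuous_apply n).comp continuous_subtype_val : Continuous fun x : P.Xpt => x.1 n)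

/-- The levels containing `x` form a neighbourhood basis at `x`. -/
theorem exists_level_subset (P : NFCseq) (x : P.Xpt) {u : Set P.Xpt} (hu : IsOpen u)
    (hx : x ∈ u) : ∃ N, ∀ m, N ≤ m → ∀ y : P.Xpt, y.1 m = x.1 m → y ∈ u := by
  obtain ⟨w, hw, rfl⟩ := isOpen_induced_iff.1 hu
  obtain ⟨I, f, hf, hI⟩ := isOpen_pi_iff.1 hw x.1 hx
  refine ⟨I.sup id, fun m hm y hy => hI fun n hn => ?_⟩
  have hnm : n ≤ m := (Finset.le_sup (f := id) hn).trans hm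
  rw [P.coord_eq_of_le y x hnm hy]
  exact (hf n hn).2

end NFCseq

namespace NFC

/-! ### Boxes -/

/-- The box `L_n^{v 0} × ⋯ × L_n^{v (d-1)}`; it is empty when some `v i ≥ h_n`. -/
def box (S : NFC) (d n : ℕ) (v : Fin d → ℕ) : Set (S.Xd d) :=
  {y | ∀ i, y i ∈ S.toNFCseq.level n (v i)}

/-- The set `X_𝟎^d` of points having some coordinate equal to `𝟎`. -/
def zeroSet (S : NFC) (d : ℕ) : Set (S.Xd d) := {y | ∃ i, y i = S.toNFCseq.zeroPt}

theorem T_level (S : NFC) {n j : ℕ} (hj : j + 1 < S.toNFCseq.hgt n) (x : S.toNFCseq.Xpt) :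
    (S.T x).1 n = some (j + 1) ↔ x.1 n = some j := by
  obtain ⟨N, hN⟩ := S.T_up x
  obtain ⟨a, ha, ha'⟩ := hN (n + N) (Nat.le_add_left _ _)
  exact ⟨fun h => S.toNFCseq.coord_down x (S.T x) N ha ha' h,
    fun h => S.toNFCseq.coord_up x (S.T x) N ha ha' h hj⟩

theorem preimage_box (S : NFC) (d n : ℕ) (v : Fin d → ℕ)
    (hv : ∀ i, v i + 1 < S.toNFCseq.hgt n) :
    S.Td d ⁻¹' S.box d n (fun i => v i + 1) = S.box d n v := by
  ext y
  exact forall_congr' fun i => S.T_level (hv i) (y i)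

theorem preimage_zeroSet (S : NFC) (d : ℕ) : S.Td d ⁻¹' S.zeroSet d = ∅ := by
  refine eq_empty_of_forall_notMem ?_
  rintro y ⟨i, hi⟩
  have h : S.T (y i) ∈ Set.range S.T := ⟨y i, rfl⟩
  rw [S.T_range] at h
  exact h hi

theorem isOpen_box (S : NFC) (d n : ℕ) (v : Fin d → ℕ) : IsOpen (S.box d n v) := by
  have : S.box d n v = ⋂ i, (fun y : S.Xd d => y i) ⁻¹' S.toNFCseq.level n (v i) := by
    ext y; simp [box]
  rw [this]
  exact isOpen_iInter_of_finite fun i =>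
    (S.toNFCseq.isOpen_level n (v i)).preimage (continuous_apply i)

theorem measurableSet_box (S : NFC) (d n : ℕ) (v : Fin d → ℕ) : MeasurableSet (S.box d n v) :=
  (S.isOpen_box d n v).measurableSet

theorem measurableSet_zeroSet (S : NFC) (d : ℕ) : MeasurableSet (S.zeroSet d) := by
  have : S.zeroSet d = ⋃ i, (fun y : S.Xd d => y i) ⁻¹' {S.toNFCseq.zeroPt} := by
    ext y; simp [zeroSet]
  rw [this]
  exact MeasurableSet.iUnion fun i => measurable_pi_apply i (measurableSet_singleton _)

theorem measurable_Td (S : NFC) (d : ℕ) : Measurable (S.Td d) :=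
  measurable_pi_lambda _ fun i => S.T_meas.comp (measurable_pi_apply i)

/-- The boxes containing `y` form a neighbourhood basis at `y`. -/
theorem exists_box_subset (S : NFC) (d : ℕ) (y : S.Xd d) {u : Set (S.Xd d)} (hu : IsOpen u)
    (hy : y ∈ u) : ∃ n v, y ∈ S.box d n v ∧ S.box d n v ⊆ u := by
  obtain ⟨f, hf, hsub⟩ := isOpen_pi_iff'.1 hu y hy
  choose N hN using fun i => S.toNFCseq.exists_level_subset (y i) (hf i).1 (hf i).2
  choose M hM using fun i => S.toNFCseq.eventually_tower (y i)
  let m := Finset.univ.sup N + Finset.univ.sup M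
  have hNm : ∀ i, N i ≤ m := fun i =>
    (Finset.le_sup (Finset.mem_univ i)).trans (Nat.le_add_right _ _)
  have hMm : ∀ i, M i ≤ m := fun i =>
    (Finset.le_sup (Finset.mem_univ i)).trans (Nat.le_add_left _ _)
  choose v hv using fun i => Option.ne_none_iff_exists'.1 (hM i m (hMm i))
  refine ⟨m, v, hv, fun z hz => hsub fun i _ => hN i m (hNm i) (z i) ?_⟩
  rw [hv i]
  exact hz i

/-- The boxes of all towers. -/
def boxes (S : NFC) (d : ℕ) : Set (Set (S.Xd d)) := {B | ∃ n v, B = S.box d n v}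

theorem generateFrom_boxes (S : NFC) (d : ℕ) :
    (inferInstance : MeasurableSpace (S.Xd d)) = MeasurableSpace.generateFrom (S.boxes d) := by
  have hb : TopologicalSpace.IsTopologicalBasis (S.boxes d) := by
    refine TopologicalSpace.isTopologicalBasis_of_isOpen_of_nhds ?_ ?_
    · rintro _ ⟨n, v, rfl⟩
      exact S.isOpen_box d n v
    · intro y u hy hu
      obtain ⟨n, v, h1, h2⟩ := S.exists_box_subset d y hu hy
      exact ⟨_, ⟨n, v, rfl⟩, h1, h2⟩
  exact (BorelSpace.measurable_eq (α := S.Xd d)).trans hb.borel_eq_generateFrom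

/-- Two boxes which meet are nested. -/
theorem box_subset (S : NFC) (d : ℕ) {n m : ℕ} (hnm : n ≤ m) {v w : Fin d → ℕ} {y : S.Xd d}
    (hv : y ∈ S.box d n v) (hw : y ∈ S.box d m w) : S.box d m w ⊆ S.box d n v := by
  intro z hz i
  have h : (z i).1 m = (y i).1 m := (hz i).trans (hw i).symm
  exact (S.toNFCseq.coord_eq_of_le _ _ hnm h).trans (hv i)

theorem isPiSystem_boxes (S : NFC) (d : ℕ) : IsPiSystem (S.boxes d) := by
  rintro _ ⟨n, v, rfl⟩ _ ⟨m, w, rfl⟩ ⟨y, hy, hy2⟩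
  rcases le_total n m with h | h
  · exact ⟨m, w, inter_eq_self_of_subset_right (S.box_subset d h hy hy2)⟩
  · exact ⟨n, v, inter_eq_self_of_subset_left (S.box_subset d h hy2 hy)⟩

/-! ### Boxes avoiding the bottom level -/

/-- Boxes whose projections all avoid the bottom level. -/
def posBoxes (S : NFC) (d : ℕ) : Set (Set (S.Xd d)) :=
  {B | ∃ n, ∃ v : Fin d → ℕ, B = S.box d n (fun i => v i + 1)}

theorem exists_posBox (S : NFC) (d : ℕ) (y : S.Xd d) (hy : y ∉ S.zeroSet d) :
    ∃ B ∈ S.posBoxes d, y ∈ B := by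
  choose N hN using fun i => S.toNFCseq.eventually_ne_zero (y i) fun h => hy ⟨i, h⟩
  choose M hM using fun i => S.toNFCseq.eventually_tower (y i)
  let m := Finset.univ.sup N + Finset.univ.sup M
  have hNm : ∀ i, N i ≤ m := fun i =>
    (Finset.le_sup (Finset.mem_univ i)).trans (Nat.le_add_right _ _)
  have hMm : ∀ i, M i ≤ m := fun i =>
    (Finset.le_sup (Finset.mem_univ i)).trans (Nat.le_add_left _ _)
  have hv : ∀ i, ∃ v, (y i).1 m = some (v + 1) := fun i => by
    obtain ⟨a, ha⟩ := Option.ne_none_iff_exists'.1 (hM i m (hMm i))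
    obtain ⟨c, rfl⟩ := Nat.exists_eq_succ_of_ne_zero (n := a) (by
      rintro rfl
      exact hN i m (hNm i) ha)
    exact ⟨c, ha⟩
  choose v hv using hv
  exact ⟨_, ⟨m, v, rfl⟩, hv⟩

/-- The class of boxes avoiding the bottom level is stable under intersecting with a box:
inside a non-bottom level of tower `n`, every level of a higher tower is non-bottom. -/
theorem inter_posBox (S : NFC) (d : ℕ) {s t : Set (S.Xd d)} (hs : s ∈ S.boxes d)
    (ht : t ∈ S.posBoxes d) (hne : (s ∩ t).Nonempty) : s ∩ t ∈ S.posBoxes d := by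
  obtain ⟨m, w, rfl⟩ := hs
  obtain ⟨n, v, rfl⟩ := ht
  obtain ⟨y, hy, hy2⟩ := hne
  rcases le_total m n with h | h
  · exact ⟨n, v, inter_eq_self_of_subset_right (S.box_subset d h hy hy2)⟩
  · have hw : ∀ i, ∃ c, w i = c + 1 := fun i => by
      refine Nat.exists_eq_succ_of_ne_zero fun h0 => ?_
      have h1 : (y i).1 m = some (w i) := hy i
      have h2 : (y i).1 n = some (v i + 1) := hy2 i
      rw [h0] at h1
      rw [S.toNFCseq.coord_zero_of_le (y i) h h1] at h2
      simp at h2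
    choose c hc using hw
    obtain rfl : w = fun i => c i + 1 := funext hc
    exact ⟨m, c, inter_eq_self_of_subset_left (S.box_subset d h hy2 hy)⟩

theorem box_eq_empty (S : NFC) (d n : ℕ) (v : Fin d → ℕ)
    (hv : ¬ ∀ i, v i < S.toNFCseq.hgt n) : S.box d n v = ∅ := by
  refine eq_empty_of_forall_notMem fun y hy => hv fun i => ?_
  exact S.toNFCseq.coord_lt (y i) (hy i)

theorem box_subset_towerD (S : NFC) (d n : ℕ) (v : Fin d → ℕ) :
    S.box d n v ⊆ S.towerD d n := by
  intro y hy i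
  exact Option.ne_none_iff_exists'.2 ⟨v i, hy i⟩

theorem countable_posBoxes (S : NFC) (d : ℕ) : (S.posBoxes d).Countable := by
  refine (countable_range fun p : ℕ × (Fin d → ℕ) => S.box d p.1 fun i => p.2 i + 1).mono ?_
  rintro _ ⟨n, v, rfl⟩
  exact ⟨(n, v), rfl⟩

end NFC

/-- A Radon measure `σ` on `X^d` is `T^{×d}`-invariant iff
(1) `σ(X_𝟎^d) = 0`, and (2) for each `n`, any two `n`-boxes lying on the same
`n`-diagonal (i.e. with index vectors differing by a constant shift) have the same
`σ`-measure. -/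
theorem stmt7 (S : NFC) (d : ℕ) (hd : 1 ≤ d) (σ : Measure (S.Xd d))
    (hR : S.IsRadon d σ) :
    S.InvariantD d σ ↔
      (σ {y : S.Xd d | ∃ i, y i = S.toNFCseq.zeroPt} = 0 ∧
       ∀ n : ℕ, ∀ v : Fin d → ℕ, ∀ m : ℕ, (∀ i, v i + m < S.toNFCseq.hgt n) →
         σ {y : S.Xd d | ∀ i, y i ∈ S.toNFCseq.level n (v i)} =
           σ {y : S.Xd d | ∀ i, y i ∈ S.toNFCseq.level n (v i + m)}) := by
  constructor
  · intro hinv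
    refine ⟨?_, fun n v m hm => ?_⟩
    · have h := hinv _ (S.measurableSet_zeroSet d)
      rw [S.preimage_zeroSet, measure_empty] at h
      exact h.symm
    · change σ (S.box d n v) = σ (S.box d n fun i => v i + m)
      induction m with
      | zero => rfl
      | succ m ih =>
        rw [ih fun i => (Nat.lt_succ_self _).trans (hm i),
          ← S.preimage_box d n (fun i => v i + m) hm]
        exact hinv _ (S.measurableSet_box d n _)
  · rintro ⟨h0, hdiag⟩
    have h0' : σ (S.zeroSet d) = 0 := h0
    have hT := S.measurable_Td d
    have hmap0 : σ.map (S.Td d) (S.zeroSet d) = 0 := by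
      rw [Measure.map_apply hT (S.measurableSet_zeroSet d), S.preimage_zeroSet, measure_empty]
    have hpos : ∀ t ∈ S.posBoxes d, σ t = σ.map (S.Td d) t := by
      rintro _ ⟨n, v, rfl⟩
      rw [Measure.map_apply hT (S.measurableSet_box d n _)]
      by_cases hv : ∀ i, v i + 1 < S.toNFCseq.hgt n
      · rw [S.preimage_box d n v hv]
        exact (hdiag n v 1 hv).symm
      · rw [S.box_eq_empty d n _ hv, preimage_empty]
    have heq : σ = σ.map (S.Td d) := by
      refine Measure.ext_of_generateFrom_of_cover (S := S.boxes d)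
        (T := insert (S.zeroSet d) (S.posBoxes d)) (S.generateFrom_boxes d)
        ((S.countable_posBoxes d).insert _) (S.isPiSystem_boxes d) ?_ ?_ ?_ ?_
      · refine eq_univ_of_forall fun y => ?_
        by_cases hy : y ∈ S.zeroSet d
        · exact ⟨_, mem_insert _ _, hy⟩
        · obtain ⟨B, hB, hyB⟩ := S.exists_posBox d y hy
          exact ⟨B, mem_insert_of_mem _ hB, hyB⟩
      · rintro t (rfl | ⟨n, v, rfl⟩)
        · rw [h0']
          exact ENNReal.zero_ne_top
        · exact ((measure_mono (S.box_subset_towerD d n _)).trans_lt (hR n)).ne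
      · rintro t (rfl | ht) s hs
        · rw [measure_mono_null inter_subset_right h0',
            measure_mono_null inter_subset_right hmap0]
        · rcases (s ∩ t).eq_empty_or_nonempty with he | hne
          · rw [he, measure_empty, measure_empty]
          · exact hpos _ (S.inter_posBox d hs ht hne)
      · rintro t (rfl | ht)
        · rw [h0', hmap0]
        · exact hpos t ht
    intro A hA
    rw [← Measure.map_apply hT hA, ← heq]
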